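/- Assume the network data of the context with α_i = 0 and β_ij = 0, and suppose that for every i ∈ {1,…,N} and every k ∈ I the block LMI (18) holds: the symmetric block matrix with block rows [Q̄_i^k, ⋆, ⋆, ⋆], [N_i^k, −γ²I, ⋆, ⋆], [S_i^k, 0, −γ²I, ⋆], [(Ξ_i^k)', 0, 0, −Z_i^k] is negative definite, where Q̄_i^k = X_i^k(A + δ_i I − B₂(D_i^k)'(E_i^k)^{-1}C_i^k) + (A + δ_i I − B₂(D_i^k)'(E_i^k)^{-1}C_i^k)'X_i^k + (p_i^k + q_i^k)I + Σ_{l=1}^M λ_kl X_i^l − γ²(C_i^k)'(E_i^k)^{-1}C_i^k − γ² Σ_{j∈V_i^k} H_ij'F_ij^{-1}H_ij. Define the gains K_ij^k = γ²(X_i^k)^{-1} H_ij' F_ij^{-1} and L_i^k = [ γ²(X_i^k)^{-1}(C_i^k)' + B₂(D_i^k)' ] (E_i^k)^{-1}, and set ε = min_{i,k} 2δ_i/(q_i^k + 1). Then for every k ∈ I and all vectors e_1,…,e_N ∈ ℝ^n, ξ ∈ ℝ^l, ξ_i ∈ ℝ^{l_i}, w_ij ∈ ℝ^{s_ij} (j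 ∈ V_i^k): N·Ψ^k(e) + Σ_{i=1}^N [ Σ_{l=1}^M λ_kl e_i' X_i^l e_i + 2 e_i' X_i^k f_i ] ≤ −ε Σ_{i=1}^N e_i' X_i^k e_i + γ² Σ_{i=1}^N ( ‖ξ‖² + ‖ξ_i‖² + Σ_{j∈V_i^k} ‖w_ij‖² ), where f_i = (A − L_i^k C_i^k) e_i + Σ_{j∈V_i^k} K_ij^k ( H_ij (e_j − e_i) − G_ij w_ij ) + (B₂ − L_i^k D_i^k) ξ − L_i^k D̄_i^k ξ_i, and Ψ^k(e) = (1/N) Σ_{i=1}^N Σ_{j∈V_i^k} ‖e_j − e_i‖². -/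

import Mathlib

open Matrix Finset

noncomputable section

/-- The data of the switching sensor network (special case with exactly known
estimator dynamics, i.e. `α_i = 0`, `β_ij = 0`). -/
structure NetData (n N M l : ℕ) where
  A : Matrix (Fin n) (Fin n) ℝ
  B2 : Matrix (Fin n) (Fin l) ℝ
  r : Fin N → ℕ
  li : Fin N → ℕ
  rr : Fin N → Fin N → ℕ
  ss : Fin N → Fin N → ℕ
  V : Fin N → Fin M → Finset (Fin N)
  C : (i : Fin N) → Fin M → Matrix (Fin (r i)) (Fin n) ℝ
  D : (i : Fin N) → Fin M → Matrix (Fin (r i)) (Fin l) ℝ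
  Dbar : (i : Fin N) → Fin M → Matrix (Fin (r i)) (Fin (li i)) ℝ
  H : (i j : Fin N) → Matrix (Fin (rr i j)) (Fin n) ℝ
  G : (i j : Fin N) → Matrix (Fin (rr i j)) (Fin (ss i j)) ℝ
  Lam : Matrix (Fin M) (Fin M) ℝ

namespace NetData

variable {n N M l : ℕ} (nd : NetData n N M l)

/-- `E_i^k = D_i^k (D_i^k)' + D̄_i^k (D̄_i^k)'`. -/
def E (i : Fin N) (k : Fin M) : Matrix (Fin (nd.r i)) (Fin (nd.r i)) ℝ :=
  nd.D i k * (nd.D i k)ᵀ + nd.Dbar i k * (nd.Dbar i k)ᵀ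

/-- `F_ij = G_ij G_ij'`. -/
def F (i j : Fin N) : Matrix (Fin (nd.rr i j)) (Fin (nd.rr i j)) ℝ :=
  nd.G i j * (nd.G i j)ᵀ

/-- In-degree `p_i^k = |V_i^k|`. -/
def pdeg (i : Fin N) (k : Fin M) : ℕ := (nd.V i k).card

/-- Out-degree `q_i^k = |{j : i ∈ V_j^k}|`. -/
def qdeg (i : Fin N) (k : Fin M) : ℕ :=
  (Finset.univ.filter fun j => i ∈ nd.V j k).card

variable (γ : ℝ) (δ : Fin N → ℝ)
  (X : Fin N → Fin M → Matrix (Fin n) (Fin n) ℝ)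

/-- The block `Q̄_i^k` of the LMI (18). -/
def Qbarblk (i : Fin N) (k : Fin M) : Matrix (Fin n) (Fin n) ℝ :=
  X i k * (nd.A + δ i • 1 - nd.B2 * (nd.D i k)ᵀ * (nd.E i k)⁻¹ * nd.C i k)
  + (nd.A + δ i • 1 - nd.B2 * (nd.D i k)ᵀ * (nd.E i k)⁻¹ * nd.C i k)ᵀ * X i k
  + (((nd.pdeg i k : ℝ) + (nd.qdeg i k : ℝ))) • 1
  + ∑ l', nd.Lam k l' • X i l'
  - γ ^ 2 • ((nd.C i k)ᵀ * (nd.E i k)⁻¹ * nd.C i k)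
  - γ ^ 2 • ∑ j ∈ nd.V i k, (nd.H i j)ᵀ * (nd.F i j)⁻¹ * nd.H i j

/-- The block `N_i^k`. -/
def Nblk (i : Fin N) (k : Fin M) : Matrix (Fin l) (Fin n) ℝ :=
  (1 - (nd.D i k)ᵀ * (nd.E i k)⁻¹ * nd.D i k) * nd.B2ᵀ * X i k

/-- The block `S_i^k`. -/
def Sblk (i : Fin N) (k : Fin M) : Matrix (Fin (nd.li i)) (Fin n) ℝ :=
  -((nd.Dbar i k)ᵀ * (nd.E i k)⁻¹ * nd.D i k * nd.B2ᵀ * X i k)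

/-- Entry of the block `Ξ_i^k` (horizontal concatenation of the blocks
`γ² H_ij' F_ij⁻¹ H_ij − I`, `j ∈ V_i^k`). -/
def xiBlk (i : Fin N) (k : Fin M)
    (x : Fin n) (jc : {j // j ∈ nd.V i k} × Fin n) : ℝ :=
  (γ ^ 2 • ((nd.H i jc.1.1)ᵀ * (nd.F i jc.1.1)⁻¹ * nd.H i jc.1.1)
    - (1 : Matrix (Fin n) (Fin n) ℝ)) x jc.2

/-- Index type for the rows/columns of the block matrix in the LMI (18). -/
abbrev idx (i : Fin N) (k : Fin M) : Type :=
  Fin n ⊕ (Fin l ⊕ (Fin (nd.li i) ⊕ ({j // j ∈ nd.V i k} × Fin n)))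

/-- The symmetric block matrix of the LMI (18), with block rows
`[Q̄, ⋆, ⋆, ⋆]`, `[N, −γ²I, ⋆, ⋆]`, `[S, 0, −γ²I, ⋆]`, `[Ξ', 0, 0, −Z]`. -/
def bigMat (i : Fin N) (k : Fin M) :
    Matrix (nd.idx i k) (nd.idx i k) ℝ :=
  Matrix.of fun a b =>
    match a, b with
    -- block row 1
    | .inl x, .inl y => nd.Qbarblk γ δ X i k x y
    | .inl x, .inr (.inl y) => (nd.Nblk X i k)ᵀ x y
    | .inl x, .inr (.inr (.inl y)) => (nd.Sblk X i k)ᵀ x y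
    | .inl x, .inr (.inr (.inr jc)) => nd.xiBlk γ i k x jc
    -- block row 2
    | .inr (.inl x), .inl y => nd.Nblk X i k x y
    | .inr (.inl x), .inr (.inl y) => if x = y then -(γ ^ 2) else 0
    | .inr (.inl _), .inr (.inr _) => 0
    -- block row 3
    | .inr (.inr (.inl x)), .inl y => nd.Sblk X i k x y
    | .inr (.inr (.inl _)), .inr (.inl _) => 0
    | .inr (.inr (.inl x)), .inr (.inr (.inl y)) => if x = y then -(γ ^ 2) else 0
    | .inr (.inr (.inl _)), .inr (.inr (.inr _)) => 0
    -- block row 4 : [Ξ', 0, 0, −Z]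
    | .inr (.inr (.inr jc)), .inl y => nd.xiBlk γ i k y jc
    | .inr (.inr (.inr _)), .inr (.inl _) => 0
    | .inr (.inr (.inr _)), .inr (.inr (.inl _)) => 0
    | .inr (.inr (.inr jc)), .inr (.inr (.inr jc')) =>
        if jc.1 = jc'.1 then
          -((2 * δ jc.1.1 / ((nd.qdeg jc.1.1 k : ℝ) + 1)) * X jc.1.1 k jc.2 jc'.2)
        else 0

/-- The interconnection gain `K_ij^k = γ² (X_i^k)⁻¹ H_ij' F_ij⁻¹`. -/
def Kgain (i j : Fin N) (k : Fin M) : Matrix (Fin n) (Fin (nd.rr i j)) ℝ :=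
  γ ^ 2 • ((X i k)⁻¹ * (nd.H i j)ᵀ * (nd.F i j)⁻¹)

/-- The innovation gain `L_i^k = [γ² (X_i^k)⁻¹ (C_i^k)' + B₂ (D_i^k)'] (E_i^k)⁻¹`. -/
def Lgain (i : Fin N) (k : Fin M) : Matrix (Fin n) (Fin (nd.r i)) ℝ :=
  (γ ^ 2 • ((X i k)⁻¹ * (nd.C i k)ᵀ) + nd.B2 * (nd.D i k)ᵀ) * (nd.E i k)⁻¹

/-- The error drift `f_i` of the (unperturbed) observer network. -/
def drift (k : Fin M) (e : Fin N → Fin n → ℝ) (ξ : Fin l → ℝ)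
    (ξl : (i : Fin N) → Fin (nd.li i) → ℝ)
    (w : (i j : Fin N) → Fin (nd.ss i j) → ℝ)
    (i : Fin N) : Fin n → ℝ :=
  (nd.A - nd.Lgain γ X i k * nd.C i k) *ᵥ e i
  + ∑ j ∈ nd.V i k,
      nd.Kgain γ X i j k *ᵥ (nd.H i j *ᵥ (e j - e i) - nd.G i j *ᵥ w i j)
  + (nd.B2 - nd.Lgain γ X i k * nd.D i k) *ᵥ ξ
  - (nd.Lgain γ X i k * nd.Dbar i k) *ᵥ ξl i

/-- The disagreement function `Ψ^k(e) = (1/N) Σ_i Σ_{j ∈ V_i^k} ‖e_j − e_i‖²`. -/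
def disagree (k : Fin M) (e : Fin N → Fin n → ℝ) : ℝ :=
  (1 / (N : ℝ)) * ∑ i, ∑ j ∈ nd.V i k, (e j - e i) ⬝ᵥ (e j - e i)

end NetData

theorem quad_big {n N M l : ℕ} (nd : NetData n N M l) (γ : ℝ) (δ : Fin N → ℝ)
    (X : Fin N → Fin M → Matrix (Fin n) (Fin n) ℝ) (i : Fin N) (k : Fin M)
    (e : Fin N → Fin n → ℝ) (u : Fin l → ℝ) (v : Fin (nd.li i) → ℝ)
    (h : (-(nd.bigMat γ δ X i k)).PosDef) :
    e i ⬝ᵥ (nd.Qbarblk γ δ X i k *ᵥ e i) + 2 * (u ⬝ᵥ (nd.Nblk X i k *ᵥ e i))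
      + 2 * (v ⬝ᵥ (nd.Sblk X i k *ᵥ e i)) - γ ^ 2 * (u ⬝ᵥ u) - γ ^ 2 * (v ⬝ᵥ v)
      + 2 * ∑ j ∈ nd.V i k, e i ⬝ᵥ ((γ ^ 2 • ((nd.H i j)ᵀ * (nd.F i j)⁻¹ * nd.H i j)
          - (1 : Matrix (Fin n) (Fin n) ℝ)) *ᵥ e j)
      - ∑ j ∈ nd.V i k, (2 * δ j / ((nd.qdeg j k : ℝ) + 1)) * (e j ⬝ᵥ (X j k *ᵥ e j)) ≤ 0 := by
  set z : nd.idx i k → ℝ :=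
    Sum.elim (e i) (Sum.elim u (Sum.elim v (fun jc => e jc.1.1 jc.2))) with hz
  have h0 := h.posSemidef.dotProduct_mulVec_nonneg z
  have hs : ∀ f : Fin N → ℝ, ∑ j ∈ nd.V i k, f j = ∑ j : {j // j ∈ nd.V i k}, f j.1 :=
    fun f => (Finset.sum_coe_sort _ _).symm
  have hM : nd.bigMat γ δ X i k *ᵥ z =
     Sum.elim (nd.Qbarblk γ δ X i k *ᵥ e i + (nd.Nblk X i k)ᵀ *ᵥ u + (nd.Sblk X i k)ᵀ *ᵥ v
        + ∑ j ∈ nd.V i k, ((γ ^ 2 • ((nd.H i j)ᵀ * (nd.F i j)⁻¹ * nd.H i j)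
          - (1 : Matrix (Fin n) (Fin n) ℝ)) *ᵥ e j))
      (Sum.elim (nd.Nblk X i k *ᵥ e i - γ ^ 2 • u)
        (Sum.elim (nd.Sblk X i k *ᵥ e i - γ ^ 2 • v)
         (fun jc => (e i ᵥ* (γ ^ 2 • ((nd.H i jc.1.1)ᵀ * (nd.F i jc.1.1)⁻¹ * nd.H i jc.1.1)
          - (1 : Matrix (Fin n) (Fin n) ℝ))) jc.2
          - (2 * δ jc.1.1 / ((nd.qdeg jc.1.1 k : ℝ) + 1)) * (X jc.1.1 k *ᵥ e jc.1.1) jc.2))) := by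
    funext a
    rcases a with a | a | a | ⟨j, a⟩
    · simp only [mulVec, dotProduct, Fintype.sum_sum_type, Sum.elim_inl, Sum.elim_inr, hz,
        NetData.bigMat, Matrix.of_apply, Fintype.sum_prod_type, Pi.add_apply, Finset.sum_apply, hs]
      simp only [NetData.xiBlk]
      ring
    · simp [mulVec, dotProduct, Fintype.sum_sum_type, hz, NetData.bigMat, sub_eq_add_neg]
    · simp [mulVec, dotProduct, Fintype.sum_sum_type, hz, NetData.bigMat, sub_eq_add_neg]
    · simp only [mulVec, vecMul, dotProduct, Fintype.sum_sum_type, Sum.elim_inl, Sum.elim_inr, hz,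
        NetData.bigMat, Matrix.of_apply, Fintype.sum_prod_type, ite_mul, zero_mul,
        Finset.sum_const_zero, zero_add]
      rw [Finset.sum_eq_single j]
      · simp [NetData.xiBlk, Finset.mul_sum, sub_eq_add_neg, mul_comm, mul_assoc, mul_left_comm]
      · intro b _ hb
        simp [hb.symm]
      · simp
  rw [neg_mulVec, hM] at h0
  have hst : star z = z := by funext a; simp
  have h4 : (fun jc : {j // j ∈ nd.V i k} × Fin n => e jc.1.1 jc.2) ⬝ᵥ
      (fun jc => (e i ᵥ* (γ ^ 2 • ((nd.H i jc.1.1)ᵀ * (nd.F i jc.1.1)⁻¹ * nd.H i jc.1.1)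
          - (1 : Matrix (Fin n) (Fin n) ℝ))) jc.2
          - (2 * δ jc.1.1 / ((nd.qdeg jc.1.1 k : ℝ) + 1)) * (X jc.1.1 k *ᵥ e jc.1.1) jc.2)
      = ∑ j ∈ nd.V i k, e i ⬝ᵥ ((γ ^ 2 • ((nd.H i j)ᵀ * (nd.F i j)⁻¹ * nd.H i j)
          - (1 : Matrix (Fin n) (Fin n) ℝ)) *ᵥ e j)
      - ∑ j ∈ nd.V i k, (2 * δ j / ((nd.qdeg j k : ℝ) + 1)) * (e j ⬝ᵥ (X j k *ᵥ e j)) := by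
    rw [hs, hs, ← Finset.sum_sub_distrib]
    conv_lhs => rw [dotProduct]
    rw [Fintype.sum_prod_type]
    refine Finset.sum_congr rfl fun j _ => ?_
    rw [dotProduct_mulVec, dotProduct_comm (e i ᵥ* _)]
    simp only [dotProduct, Finset.mul_sum, ← Finset.sum_sub_distrib]
    refine Finset.sum_congr rfl fun j _ => ?_
    ring
  rw [hst, dotProduct_neg, hz, sumElim_dotProduct_sumElim, sumElim_dotProduct_sumElim,
    sumElim_dotProduct_sumElim, h4] at h0
  simp only [dotProduct_add, dotProduct_sub, dotProduct_smul, smul_eq_mul, dotProduct_sum] at h0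
  have h1 : e i ⬝ᵥ (nd.Nblk X i k)ᵀ *ᵥ u = u ⬝ᵥ (nd.Nblk X i k *ᵥ e i) := by
    rw [dotProduct_mulVec, vecMul_transpose, dotProduct_comm]
  have h2 : e i ⬝ᵥ (nd.Sblk X i k)ᵀ *ᵥ v = v ⬝ᵥ (nd.Sblk X i k *ᵥ e i) := by
    rw [dotProduct_mulVec, vecMul_transpose, dotProduct_comm]
  rw [h1, h2] at h0
  linarith

theorem tr_dot {m p : ℕ} (A : Matrix (Fin m) (Fin p) ℝ) (x : Fin p → ℝ) (y : Fin m → ℝ) :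
    x ⬝ᵥ (Aᵀ *ᵥ y) = (A *ᵥ x) ⬝ᵥ y := by
  rw [dotProduct_mulVec, vecMul_transpose]

theorem sym_dot {m : ℕ} (A : Matrix (Fin m) (Fin m) ℝ) (h : Aᵀ = A) (x y : Fin m → ℝ) :
    x ⬝ᵥ (A *ᵥ y) = (A *ᵥ x) ⬝ᵥ y := by
  conv_lhs => rw [← h]
  exact tr_dot _ _ _

theorem sym_of {m : ℕ} {A : Matrix (Fin m) (Fin m) ℝ} (h : A.PosDef) : Aᵀ = A := by
  have := h.isHermitian
  rwa [Matrix.IsHermitian, conjTranspose_eq_transpose_of_trivial] at this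

theorem mul_inv_vec {m : ℕ} {A : Matrix (Fin m) (Fin m) ℝ} (h : A.PosDef) (x : Fin m → ℝ) :
    A *ᵥ (A⁻¹ *ᵥ x) = x := by
  rw [mulVec_mulVec, Matrix.mul_nonsing_inv _ ((Matrix.isUnit_iff_isUnit_det _).1 h.isUnit),
    one_mulVec]

theorem young_F {m p : ℕ} (G : Matrix (Fin m) (Fin p) ℝ) (h : (G * Gᵀ).PosDef)
    (a : Fin m → ℝ) (w : Fin p → ℝ) :
    -2 * (a ⬝ᵥ ((G * Gᵀ)⁻¹ *ᵥ (G *ᵥ w))) ≤ a ⬝ᵥ ((G * Gᵀ)⁻¹ *ᵥ a) + w ⬝ᵥ w := by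
  have hs := sym_of h.inv
  set P := (G * Gᵀ)⁻¹ with hP
  have h0 : 0 ≤ (w + Gᵀ *ᵥ (P *ᵥ a)) ⬝ᵥ (w + Gᵀ *ᵥ (P *ᵥ a)) := by
    simpa using dotProduct_star_self_nonneg (w + Gᵀ *ᵥ (P *ᵥ a))
  have h1 : (Gᵀ *ᵥ (P *ᵥ a)) ⬝ᵥ (Gᵀ *ᵥ (P *ᵥ a)) = a ⬝ᵥ (P *ᵥ a) := by
    rw [tr_dot, mulVec_mulVec, hP, mul_inv_vec h]
  have h2 : w ⬝ᵥ (Gᵀ *ᵥ (P *ᵥ a)) = a ⬝ᵥ (P *ᵥ (G *ᵥ w)) := by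
    rw [tr_dot, dotProduct_comm, sym_dot P hs]
  rw [dotProduct_add, add_dotProduct, add_dotProduct, h1, dotProduct_comm (Gᵀ *ᵥ (P *ᵥ a)) w, h2] at h0
  linarith

theorem young_P {m : ℕ} (P : Matrix (Fin m) (Fin m) ℝ) (h : P.PosDef) (a y : Fin m → ℝ) :
    -2 * (a ⬝ᵥ (P *ᵥ y)) ≤ a ⬝ᵥ (P *ᵥ a) + y ⬝ᵥ (P *ᵥ y) := by
  have h0 := h.posSemidef.dotProduct_mulVec_nonneg (a + y)
  simp only [star_trivial, mulVec_add, dotProduct_add, add_dotProduct] at h0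
  have : y ⬝ᵥ (P *ᵥ a) = a ⬝ᵥ (P *ᵥ y) := by
    rw [sym_dot P (sym_of h) a y, dotProduct_comm]
  linarith

theorem node_ineq {n N M l : ℕ} (nd : NetData n N M l) (γ : ℝ) (δ : Fin N → ℝ)
    (X : Fin N → Fin M → Matrix (Fin n) (Fin n) ℝ) (i : Fin N) (k : Fin M)
    (hX : (X i k).PosDef) (hE : (nd.E i k).PosDef) (hF : ∀ j ∈ nd.V i k, (nd.F i j).PosDef)
    (h : (-(nd.bigMat γ δ X i k)).PosDef)
    (e : Fin N → Fin n → ℝ) (ξ : Fin l → ℝ)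
      (ξl : (i : Fin N) → Fin (nd.li i) → ℝ)
      (w : (i j : Fin N) → Fin (nd.ss i j) → ℝ) :
    (∑ l', nd.Lam k l' * (e i ⬝ᵥ (X i l' *ᵥ e i)))
            + 2 * (e i ⬝ᵥ (X i k *ᵥ nd.drift γ X k e ξ ξl w i))
     + ((nd.pdeg i k : ℝ) + nd.qdeg i k) * (e i ⬝ᵥ e i)
     + 2 * δ i * (e i ⬝ᵥ (X i k *ᵥ e i))
     - 2 * ∑ j ∈ nd.V i k, e i ⬝ᵥ e j
     - ∑ j ∈ nd.V i k, (2 * δ j / ((nd.qdeg j k : ℝ) + 1)) * (e j ⬝ᵥ (X j k *ᵥ e j))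
     ≤ γ ^ 2 * (ξ ⬝ᵥ ξ + ξl i ⬝ᵥ ξl i + ∑ j ∈ nd.V i k, w i j ⬝ᵥ w i j) := by
  have hXs := sym_of hX
  have hPs := sym_of hE.inv
  set Y := X i k with hY
  set P := (nd.E i k)⁻¹ with hP
  set C := nd.C i k with hC
  set D := nd.D i k with hD
  set D' := nd.Dbar i k with hD'
  set B := nd.B2 with hB
  set x := e i with hx
  set η := ξl i with hη
  set a := C *ᵥ x with ha
  set y := D *ᵥ ξ + D' *ᵥ η with hy
  set b := Bᵀ *ᵥ (Y *ᵥ x) with hb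
  set u := ξ - Dᵀ *ᵥ (P *ᵥ y) with hu
  set v := η - D'ᵀ *ᵥ (P *ᵥ y) with hv
  have hL := quad_big nd γ δ X i k e u v h
  have hDu : D *ᵥ u + D' *ᵥ v = 0 := by
    have : (D * Dᵀ + D' * D'ᵀ) *ᵥ (P *ᵥ y) = y := mul_inv_vec hE y
    rw [add_mulVec, ← mulVec_mulVec, ← mulVec_mulVec] at this
    rw [hu, hv, mulVec_sub, mulVec_sub]
    calc _ = y - (D *ᵥ Dᵀ *ᵥ P *ᵥ y + D' *ᵥ D'ᵀ *ᵥ P *ᵥ y) := by rw [hy]; abel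
      _ = 0 := by rw [this, sub_self]
  have hnorm : u ⬝ᵥ u + v ⬝ᵥ v = ξ ⬝ᵥ ξ + η ⬝ᵥ η - y ⬝ᵥ (P *ᵥ y) := by
    have h1 : u ⬝ᵥ (Dᵀ *ᵥ (P *ᵥ y)) + v ⬝ᵥ (D'ᵀ *ᵥ (P *ᵥ y)) = 0 := by
      rw [tr_dot, tr_dot, ← add_dotProduct, hDu, zero_dotProduct]
    have h2 : ξ ⬝ᵥ (Dᵀ *ᵥ (P *ᵥ y)) + η ⬝ᵥ (D'ᵀ *ᵥ (P *ᵥ y)) = y ⬝ᵥ (P *ᵥ y) := by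
      rw [tr_dot, tr_dot, ← add_dotProduct]
    have h3 : u ⬝ᵥ u = u ⬝ᵥ ξ - u ⬝ᵥ (Dᵀ *ᵥ (P *ᵥ y)) := by rw [← dotProduct_sub]
    have h4 : v ⬝ᵥ v = v ⬝ᵥ η - v ⬝ᵥ (D'ᵀ *ᵥ (P *ᵥ y)) := by rw [← dotProduct_sub]
    have h5 : u ⬝ᵥ ξ = ξ ⬝ᵥ ξ - ξ ⬝ᵥ (Dᵀ *ᵥ (P *ᵥ y)) := by
      rw [dotProduct_comm u, ← dotProduct_sub]
    have h6 : v ⬝ᵥ η = η ⬝ᵥ η - η ⬝ᵥ (D'ᵀ *ᵥ (P *ᵥ y)) := by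
      rw [dotProduct_comm v, ← dotProduct_sub]
    linarith
  have hNS : u ⬝ᵥ (nd.Nblk X i k *ᵥ x) + v ⬝ᵥ (nd.Sblk X i k *ᵥ x)
      = ξ ⬝ᵥ b - (D *ᵥ b) ⬝ᵥ (P *ᵥ y) := by
    have h1 : nd.Nblk X i k *ᵥ x = b - Dᵀ *ᵥ (P *ᵥ (D *ᵥ b)) := by
      simp only [NetData.Nblk, sub_mulVec, ← mulVec_mulVec, one_mulVec, hb, hP, hD, hB, hY]
    have h2 : nd.Sblk X i k *ᵥ x = - (D'ᵀ *ᵥ (P *ᵥ (D *ᵥ b))) := by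
      simp only [NetData.Sblk, neg_mulVec, ← mulVec_mulVec, hb, hP, hD, hD', hB, hY]
    have h3 : (D *ᵥ u) ⬝ᵥ (P *ᵥ (D *ᵥ b)) + (D' *ᵥ v) ⬝ᵥ (P *ᵥ (D *ᵥ b)) = 0 := by
      rw [← add_dotProduct, hDu, zero_dotProduct]
    have h4 : u ⬝ᵥ b = ξ ⬝ᵥ b - (D *ᵥ b) ⬝ᵥ (P *ᵥ y) := by
      rw [hu, sub_dotProduct, dotProduct_comm (Dᵀ *ᵥ _), tr_dot D]
    rw [h1, h2, dotProduct_sub, dotProduct_neg, tr_dot D, tr_dot D', h4]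
    linarith
  have hQ : x ⬝ᵥ (nd.Qbarblk γ δ X i k *ᵥ x) =
      2 * (x ⬝ᵥ (Y *ᵥ (nd.A *ᵥ x))) + 2 * δ i * (x ⬝ᵥ (Y *ᵥ x)) - 2 * ((D *ᵥ b) ⬝ᵥ (P *ᵥ a))
      + ((nd.pdeg i k : ℝ) + nd.qdeg i k) * (x ⬝ᵥ x)
      + ∑ l', nd.Lam k l' * (x ⬝ᵥ (X i l' *ᵥ x)) - γ ^ 2 * (a ⬝ᵥ (P *ᵥ a))
      - γ ^ 2 * ∑ j ∈ nd.V i k, (nd.H i j *ᵥ x) ⬝ᵥ ((nd.F i j)⁻¹ *ᵥ (nd.H i j *ᵥ x)) := by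
    have h1 : x ⬝ᵥ (Y *ᵥ ((nd.A + δ i • 1 - B * Dᵀ * P * C) *ᵥ x)) =
        (x ⬝ᵥ (Y *ᵥ (nd.A *ᵥ x))) + δ i * (x ⬝ᵥ (Y *ᵥ x)) - ((D *ᵥ b) ⬝ᵥ (P *ᵥ a)) := by
      have : x ⬝ᵥ (Y *ᵥ (B *ᵥ (Dᵀ *ᵥ (P *ᵥ a)))) = ((D *ᵥ b) ⬝ᵥ (P *ᵥ a)) := by
        rw [sym_dot Y hXs, ← tr_dot D, hb]
        conv_rhs => rw [dotProduct_comm, tr_dot, dotProduct_comm]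
      rw [← this]
      simp only [sub_mulVec, add_mulVec, ← mulVec_mulVec, mulVec_sub, mulVec_add, smul_mulVec,
        one_mulVec, mulVec_smul, dotProduct_add, dotProduct_sub, dotProduct_smul, smul_eq_mul, ha]
    have h2 : x ⬝ᵥ ((nd.A + δ i • 1 - B * Dᵀ * P * C)ᵀ *ᵥ (Y *ᵥ x)) =
        x ⬝ᵥ (Y *ᵥ ((nd.A + δ i • 1 - B * Dᵀ * P * C) *ᵥ x)) := by
      rw [tr_dot, sym_dot Y hXs x, dotProduct_comm]
    have h3 : nd.Qbarblk γ δ X i k *ᵥ x = Y *ᵥ ((nd.A + δ i • 1 - B * Dᵀ * P * C) *ᵥ x)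
        + (nd.A + δ i • 1 - B * Dᵀ * P * C)ᵀ *ᵥ (Y *ᵥ x)
        + ((nd.pdeg i k : ℝ) + nd.qdeg i k) • x + ∑ l', nd.Lam k l' • (X i l' *ᵥ x)
        - γ ^ 2 • (Cᵀ *ᵥ (P *ᵥ a))
        - γ ^ 2 • ∑ j ∈ nd.V i k, (nd.H i j)ᵀ *ᵥ ((nd.F i j)⁻¹ *ᵥ (nd.H i j *ᵥ x)) := by
      unfold NetData.Qbarblk
      rw [sub_mulVec, sub_mulVec, add_mulVec, add_mulVec, add_mulVec, ← mulVec_mulVec,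
        ← mulVec_mulVec, smul_mulVec, smul_mulVec, smul_mulVec, one_mulVec, sum_mulVec, sum_mulVec]
      simp only [smul_mulVec, ← mulVec_mulVec, ha, hP, hC, hD, hB, hY]
    rw [h3]
    simp only [dotProduct_add, dotProduct_sub, dotProduct_smul, smul_eq_mul, dotProduct_sum, h2, h1]
    simp only [tr_dot]
    rw [← ha]
    ring
  have hK : ∀ j ∈ nd.V i k, x ⬝ᵥ (Y *ᵥ (nd.Kgain γ X i j k *ᵥ
        (nd.H i j *ᵥ (e j - x) - nd.G i j *ᵥ w i j))) =
      γ ^ 2 * ((nd.H i j *ᵥ x) ⬝ᵥ ((nd.F i j)⁻¹ *ᵥ (nd.H i j *ᵥ e j)))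
      - γ ^ 2 * ((nd.H i j *ᵥ x) ⬝ᵥ ((nd.F i j)⁻¹ *ᵥ (nd.H i j *ᵥ x)))
      - γ ^ 2 * ((nd.H i j *ᵥ x) ⬝ᵥ ((nd.F i j)⁻¹ *ᵥ (nd.G i j *ᵥ w i j))) := by
    intro j _
    simp only [NetData.Kgain, smul_mulVec, ← mulVec_mulVec, mulVec_smul]
    rw [← hY, mul_inv_vec hX, dotProduct_smul, tr_dot]
    simp only [mulVec_sub, dotProduct_sub, smul_eq_mul]
    ring
  have hLg : ∀ z, x ⬝ᵥ (Y *ᵥ (nd.Lgain γ X i k *ᵥ z)) =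
      γ ^ 2 * (a ⬝ᵥ (P *ᵥ z)) + (D *ᵥ b) ⬝ᵥ (P *ᵥ z) := by
    intro z
    have : x ⬝ᵥ (Y *ᵥ (B *ᵥ (Dᵀ *ᵥ (P *ᵥ z)))) = ((D *ᵥ b) ⬝ᵥ (P *ᵥ z)) := by
      rw [sym_dot Y hXs, ← tr_dot D, hb]
      conv_rhs => rw [dotProduct_comm, tr_dot, dotProduct_comm]
    simp only [NetData.Lgain, add_mulVec, smul_mulVec, ← mulVec_mulVec, mulVec_smul, mulVec_add]
    rw [← hY, mul_inv_vec hX, dotProduct_add, dotProduct_smul, tr_dot, this, smul_eq_mul]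
  have hdr : x ⬝ᵥ (Y *ᵥ nd.drift γ X k e ξ ξl w i) =
      x ⬝ᵥ (Y *ᵥ (nd.A *ᵥ x)) - γ ^ 2 * (a ⬝ᵥ (P *ᵥ a)) - (D *ᵥ b) ⬝ᵥ (P *ᵥ a)
      - γ ^ 2 * (a ⬝ᵥ (P *ᵥ y)) - (D *ᵥ b) ⬝ᵥ (P *ᵥ y) + ξ ⬝ᵥ b
      + ∑ j ∈ nd.V i k, (γ ^ 2 * ((nd.H i j *ᵥ x) ⬝ᵥ ((nd.F i j)⁻¹ *ᵥ (nd.H i j *ᵥ e j)))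
      - γ ^ 2 * ((nd.H i j *ᵥ x) ⬝ᵥ ((nd.F i j)⁻¹ *ᵥ (nd.H i j *ᵥ x)))
      - γ ^ 2 * ((nd.H i j *ᵥ x) ⬝ᵥ ((nd.F i j)⁻¹ *ᵥ (nd.G i j *ᵥ w i j)))) := by
    rw [← Finset.sum_congr rfl hK]
    have hB1 : x ⬝ᵥ (Y *ᵥ (B *ᵥ ξ)) = ξ ⬝ᵥ b := by
      rw [hb, tr_dot, sym_dot Y hXs, dotProduct_comm]
    have hdd : nd.drift γ X k e ξ ξl w i = nd.A *ᵥ x - nd.Lgain γ X i k *ᵥ a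
        + ∑ j ∈ nd.V i k, (nd.Kgain γ X i j k *ᵥ
          (nd.H i j *ᵥ (e j - x) - nd.G i j *ᵥ w i j))
        + (B *ᵥ ξ - nd.Lgain γ X i k *ᵥ (D *ᵥ ξ)) - nd.Lgain γ X i k *ᵥ (D' *ᵥ η) := by
      simp only [NetData.drift, sub_mulVec, ← mulVec_mulVec, ha, hD, hD', hB, hC, hx, hη]
    rw [hdd]
    simp only [mulVec_add, mulVec_sub, mulVec_sum, dotProduct_add, dotProduct_sub,
      dotProduct_sum, hLg, hB1, hy]
    ring
  have hXi : ∑ j ∈ nd.V i k, x ⬝ᵥ ((γ ^ 2 • ((nd.H i j)ᵀ * (nd.F i j)⁻¹ * nd.H i j)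
          - (1 : Matrix (Fin n) (Fin n) ℝ)) *ᵥ e j) =
      γ ^ 2 * ∑ j ∈ nd.V i k, ((nd.H i j *ᵥ x) ⬝ᵥ ((nd.F i j)⁻¹ *ᵥ (nd.H i j *ᵥ e j)))
      - ∑ j ∈ nd.V i k, x ⬝ᵥ e j := by
    rw [Finset.mul_sum, ← Finset.sum_sub_distrib]
    refine Finset.sum_congr rfl fun j _ => ?_
    rw [sub_mulVec, smul_mulVec, one_mulVec, dotProduct_sub, dotProduct_smul, ← mulVec_mulVec,
      ← mulVec_mulVec, tr_dot, smul_eq_mul]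
  have hYP := mul_le_mul_of_nonneg_left (young_P P hE.inv a y) (sq_nonneg γ)
  have hYF : γ ^ 2 * ∑ j ∈ nd.V i k,
        (-2 * ((nd.H i j *ᵥ x) ⬝ᵥ ((nd.F i j)⁻¹ *ᵥ (nd.G i j *ᵥ w i j)))) ≤
      γ ^ 2 * ∑ j ∈ nd.V i k, ((nd.H i j *ᵥ x) ⬝ᵥ ((nd.F i j)⁻¹ *ᵥ (nd.H i j *ᵥ x))
        + w i j ⬝ᵥ w i j) :=
    mul_le_mul_of_nonneg_left
      (Finset.sum_le_sum fun j hj => young_F (nd.G i j) (hF j hj) _ _) (sq_nonneg γ)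
  rw [← Finset.mul_sum, Finset.sum_add_distrib] at hYF
  rw [hdr, Finset.sum_sub_distrib, Finset.sum_sub_distrib, ← Finset.mul_sum, ← Finset.mul_sum,
    ← Finset.mul_sum]
  rw [hXi, hQ] at hL
  have hn2 : γ ^ 2 * (u ⬝ᵥ u + v ⬝ᵥ v) = γ ^ 2 * (ξ ⬝ᵥ ξ + η ⬝ᵥ η - y ⬝ᵥ (P *ᵥ y)) := by
    rw [hnorm]
  linarith

/-- under the LMI (18), the dissipation inequality for the
observer network with globally broadcast Markov state holds. -/
theorem stmt11 {n N M l : ℕ} [NeZero N] [NeZero M]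
    (nd : NetData n N M l)
    (hself : ∀ i k, i ∉ nd.V i k)
    (γ : ℝ) (hγ : 0 < γ)
    (δ : Fin N → ℝ) (hδ : ∀ i, 0 < δ i)
    (X : Fin N → Fin M → Matrix (Fin n) (Fin n) ℝ)
    (hX : ∀ i k, (X i k).PosDef)
    (hE : ∀ i k, (nd.E i k).PosDef)
    (hF : ∀ i k, ∀ j ∈ nd.V i k, (nd.F i j).PosDef)
    (hLamOff : ∀ k l', k ≠ l' → 0 ≤ nd.Lam k l')
    (hLamRow : ∀ k, ∑ l', nd.Lam k l' = 0)
    -- LMI (18): the big block matrix is negative definite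
    (hLMI18 : ∀ i k, (-(nd.bigMat γ δ X i k)).PosDef) :
    ∀ (k : Fin M) (e : Fin N → Fin n → ℝ) (ξ : Fin l → ℝ)
      (ξl : (i : Fin N) → Fin (nd.li i) → ℝ)
      (w : (i j : Fin N) → Fin (nd.ss i j) → ℝ),
      (N : ℝ) * nd.disagree k e
        + ∑ i, ((∑ l', nd.Lam k l' * (e i ⬝ᵥ (X i l' *ᵥ e i)))
            + 2 * (e i ⬝ᵥ (X i k *ᵥ nd.drift γ X k e ξ ξl w i)))
      ≤ -(Finset.univ.inf' Finset.univ_nonempty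
            (fun ik : Fin N × Fin M =>
              2 * δ ik.1 / ((nd.qdeg ik.1 ik.2 : ℝ) + 1)))
          * ∑ i, e i ⬝ᵥ (X i k *ᵥ e i)
        + γ ^ 2 * ∑ i, (ξ ⬝ᵥ ξ + ξl i ⬝ᵥ ξl i
            + ∑ j ∈ nd.V i k, w i j ⬝ᵥ w i j) := by
  intro k e ξ ξl w
  have hN : (N : ℝ) ≠ 0 := Nat.cast_ne_zero.mpr (NeZero.ne N)
  have hswap : ∀ f : Fin N → ℝ, ∑ i, ∑ j ∈ nd.V i k, f j = ∑ j, (nd.qdeg j k : ℝ) * f j := by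
    intro f
    have : ∀ i, ∑ j ∈ nd.V i k, f j = ∑ j, if j ∈ nd.V i k then f j else 0 := by
      intro i; simp
    simp only [this]
    rw [Finset.sum_comm]
    refine Finset.sum_congr rfl fun j _ => ?_
    rw [← Finset.sum_filter, Finset.sum_const, nsmul_eq_mul]
    rfl
  have hdis : (N : ℝ) * nd.disagree k e =
      ∑ i, (((nd.pdeg i k : ℝ) + nd.qdeg i k) * (e i ⬝ᵥ e i)
        - 2 * ∑ j ∈ nd.V i k, e i ⬝ᵥ e j) := by
    unfold NetData.disagree
    rw [← mul_assoc, mul_one_div_cancel hN, one_mul]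
    have h1 : ∀ i, ∑ j ∈ nd.V i k, (e j - e i) ⬝ᵥ (e j - e i) =
        ∑ j ∈ nd.V i k, e j ⬝ᵥ e j + ((nd.pdeg i k : ℝ) * (e i ⬝ᵥ e i)
          - 2 * ∑ j ∈ nd.V i k, e i ⬝ᵥ e j) := by
      intro i
      have : ∀ j, (e j - e i) ⬝ᵥ (e j - e i) =
          e j ⬝ᵥ e j + (e i ⬝ᵥ e i - 2 * (e i ⬝ᵥ e j)) := by
        intro j
        rw [sub_dotProduct, dotProduct_sub, dotProduct_sub, dotProduct_comm (e j) (e i)]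
        ring
      simp only [this]
      rw [Finset.sum_add_distrib, Finset.sum_sub_distrib, Finset.sum_const, nsmul_eq_mul,
        Finset.mul_sum]
      rfl
    simp only [h1]
    rw [Finset.sum_add_distrib, hswap fun j => e j ⬝ᵥ e j, ← Finset.sum_add_distrib]
    refine Finset.sum_congr rfl fun i _ => ?_
    ring
  have hnode := Finset.sum_le_sum fun i (_ : i ∈ (Finset.univ : Finset (Fin N))) =>
    node_ineq nd γ δ X i k (hX i k) (hE i k) (hF i k) (hLMI18 i k) e ξ ξl w
  rw [← Finset.mul_sum] at hnode
  rw [Finset.sum_sub_distrib, hswap fun j => (2 * δ j / ((nd.qdeg j k : ℝ) + 1)) *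
    (e j ⬝ᵥ (X j k *ᵥ e j))] at hnode
  set ε := Finset.univ.inf' Finset.univ_nonempty
            (fun ik : Fin N × Fin M => 2 * δ ik.1 / ((nd.qdeg ik.1 ik.2 : ℝ) + 1)) with hε
  have heps : ε * ∑ i, e i ⬝ᵥ (X i k *ᵥ e i) ≤
      ∑ i, (2 * δ i * (e i ⬝ᵥ (X i k *ᵥ e i)) - (nd.qdeg i k : ℝ) *
        ((2 * δ i / ((nd.qdeg i k : ℝ) + 1)) * (e i ⬝ᵥ (X i k *ᵥ e i)))) := by
    rw [Finset.mul_sum]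
    refine Finset.sum_le_sum fun i _ => ?_
    have hle : ε ≤ 2 * δ i / ((nd.qdeg i k : ℝ) + 1) :=
      Finset.inf'_le (fun ik : Fin N × Fin M => 2 * δ ik.1 / ((nd.qdeg ik.1 ik.2 : ℝ) + 1))
        (Finset.mem_univ (i, k))
    have hq : (0 : ℝ) < (nd.qdeg i k : ℝ) + 1 := by positivity
    have hx0 : 0 ≤ e i ⬝ᵥ (X i k *ᵥ e i) := by
      simpa using (hX i k).posSemidef.dotProduct_mulVec_nonneg (e i)
    calc _ ≤ 2 * δ i / ((nd.qdeg i k : ℝ) + 1) * (e i ⬝ᵥ (X i k *ᵥ e i)) :=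
          mul_le_mul_of_nonneg_right hle hx0
      _ = _ := by field_simp; ring
  rw [hdis]
  simp only [Finset.sum_add_distrib, Finset.sum_sub_distrib] at hnode heps ⊢
  linarith
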